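/- Let α be a type and let A and B be palindromic lists over α. Let n ≥ 1 be such that d(n) is even, write T(n) = (Λ_1, …, Λ_N), and set s = d(n)/2. Then the concatenation Λ_{s+1} ⊕ Λ_{s+2} ⊕ … ⊕ Λ_N ⊕ Λ_1 ⊕ … ⊕ Λ_s is a palindromic list (i.e., the concatenation of the entries of the block list T(n) rotated by d(n)/2 blocks equals its own reverse). -/

import Mathlib

/-- Stern's diatomic sequence. -/
def stern : ℕ → ℕ
  | 0 => 0
  | 1 => 1
  | n + 2 =>
    if (n + 2) % 2 = 0 then stern ((n + 2) / 2)
    else stern ((n + 2) / 2) + stern ((n + 2) / 2 + 1)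
decreasing_by all_goals omega

/-- OEIS A003602: a(1)=1, a(2n)=a(n), a(2n+1)=n+1. (a(0)=0 as junk value.) -/
def aseq : ℕ → ℕ
  | 0 => 0
  | 1 => 1
  | n + 2 =>
    if (n + 2) % 2 = 0 then aseq ((n + 2) / 2)
    else (n + 2) / 2 + 1
decreasing_by all_goals omega

-- the modified sequence `a*`: zero at powers of two.
open Classical in
noncomputable def aStar (j : ℕ) : ℕ :=
  if ∃ k, j = 2 ^ k then 0 else aseq j

theorem aseq_le (n : ℕ) : aseq n ≤ n := by
  induction n using Nat.strong_induction_on with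
  | _ n ih =>
    match n with
    | 0 => simp [aseq]
    | 1 => simp [aseq]
    | m + 2 =>
      rw [aseq]
      split
      · exact le_trans (ih ((m + 2) / 2) (by omega)) (by omega)
      · omega

theorem aStar_le (j : ℕ) : aStar j ≤ j := by
  unfold aStar
  split
  · omega
  · exact aseq_le j

/-- The Markov-type sequence `S_{A,B}(n)`. -/
noncomputable def mseq {α : Type*} (A B : List α) : ℕ → List α
  | 0 => A
  | 1 => B
  | 2 => A ++ B
  | n + 3 =>
    if (n + 3) % 2 = 0 then
      mseq A B ((n + 3) / 2) ++ mseq A B (aseq ((n + 3) / 2))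
    else
      mseq A B (aStar ((n + 4) / 2 - 1)) ++ mseq A B ((n + 4) / 2)
decreasing_by
  all_goals first
    | omega
    | exact lt_of_le_of_lt (aseq_le _) (by omega)
    | exact lt_of_le_of_lt (aStar_le _) (by omega)

/-- The block decomposition `T(n)` of `S_{A,B}(n)`. -/
noncomputable def blockSeq {α : Type*} (A B : List α) : ℕ → List (List α)
  | 0 => [A]
  | 1 => [B]
  | 2 => [A, B]
  | n + 3 =>
    if (n + 3) % 2 = 0 then
      blockSeq A B ((n + 3) / 2) ++ blockSeq A B (aseq ((n + 3) / 2))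
    else
      blockSeq A B (aStar ((n + 4) / 2 - 1)) ++ blockSeq A B ((n + 4) / 2)
decreasing_by
  all_goals first
    | omega
    | exact lt_of_le_of_lt (aseq_le _) (by omega)
    | exact lt_of_le_of_lt (aStar_le _) (by omega)

/-!
For `n ≥ 2` put `u = T(a*(n-1))` and `v = T(a(n))`, so that `T(n) = u ++ v`. Passing from `n` to
`2n` or `2n-1` replaces `(u, v)` by `(u ++ v, v)` or `(u, u ++ v)`. Hence `(u, v)` is a Christoffel
pair over the two-letter alphabet `{A, B}`, and the lengths of `u` and `v` are `d(n-1)` and `d(n)`.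
As for any Christoffel word, `u ++ v` is also a product `x ++ y` of two palindromes with
`|x| = |v| = d(n)`. When `d(n)` is even, `x = p ++ p.reverse`, and rotating `x ++ y` by `|p|` gives
the palindrome `p.reverse ++ y ++ p`.
-/

open List (Palindrome)

section Palindrome

variable {β : Type*} {u v x y : List β}

theorem palindrome_append_append_of_append_right (hx : Palindrome x) (hux : Palindrome (u ++ x)) :
    Palindrome (u ++ (u ++ x)) := by
  have hswap : x ++ u.reverse = u ++ x := by
    rw [← hux.reverse_eq, List.reverse_append, hx.reverse_eq]
  apply Palindrome.of_reverse_eq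
  rw [List.reverse_append, hux.reverse_eq, List.append_assoc, hswap]

theorem palindrome_append_append_of_append_left (hy : Palindrome y) (hyv : Palindrome (y ++ v)) :
    Palindrome (y ++ v ++ v) := by
  have hswap : v.reverse ++ y = y ++ v := by
    rw [← hyv.reverse_eq, List.reverse_append, hy.reverse_eq]
  apply Palindrome.of_reverse_eq
  rw [List.reverse_append, hyv.reverse_eq, ← List.append_assoc, hswap]

theorem palindrome_append_append_self (hx : Palindrome x) (hy : Palindrome y) :
    Palindrome (x ++ y ++ x) :=
  .of_reverse_eq (by simp [hx.reverse_eq, hy.reverse_eq])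

theorem exists_eq_append_reverse_of_even_length (hx : Palindrome x) (heven : Even x.length) :
    ∃ p : List β, x = p ++ p.reverse := by
  obtain ⟨s, hs⟩ := heven
  refine ⟨x.take s, ?_⟩
  rw [List.reverse_take, hx.reverse_eq, hs, Nat.add_sub_cancel, List.take_append_drop]

theorem palindrome_rotate_append_half (hx : Palindrome x) (hy : Palindrome y)
    (heven : Even x.length) : Palindrome ((x ++ y).rotate (x.length / 2)) := by
  obtain ⟨p, rfl⟩ := exists_eq_append_reverse_of_even_length hx heven
  have hhalf : (p ++ p.reverse).length / 2 = p.length := by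
    rw [List.length_append, List.length_reverse]
    omega
  rw [hhalf, List.append_assoc, List.rotate_append_length_eq]
  exact .of_reverse_eq (by simp [hy.reverse_eq])

theorem palindrome_flatten {L : List (List β)} (hL : Palindrome L)
    (hmem : ∀ l ∈ L, Palindrome l) : Palindrome L.flatten := by
  have hmap : L.map List.reverse = L :=
    (List.map_congr_left fun l hl => (hmem l hl).reverse_eq).trans L.map_id
  apply Palindrome.of_reverse_eq
  rw [List.reverse_flatten, hmap, hL.reverse_eq]

end Palindrome

/-- Christoffel pairs of words over the letters `a`, `b`: the pairs generated from `([a], [b])` by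
multiplying one component by the other. `u ++ v` is then a Christoffel word with standard
factorization `(u, v)`. -/
inductive ChristoffelPair {β : Type*} (a b : β) : List β → List β → Prop
  | base : ChristoffelPair a b [a] [b]
  | append_left {u v : List β} : ChristoffelPair a b u v → ChristoffelPair a b (u ++ v) v
  | append_right {u v : List β} : ChristoffelPair a b u v → ChristoffelPair a b u (u ++ v)

/-- `(x, y)` is the palindromic factorization of the word `u ++ v`, with lengths opposite to those
of `(u, v)`. The palindromicity of `u ++ x` and `y ++ v` makes the notion stable under
`(u, v) ↦ (u ++ v, v)` and `(u, v) ↦ (u, u ++ v)`. -/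
structure PalindromicFactorization {β : Type*} (u v x y : List β) : Prop where
  append_eq : u ++ v = x ++ y
  length_eq : x.length = v.length
  palindrome_left : Palindrome x
  palindrome_right : Palindrome y
  palindrome_append_left : Palindrome (u ++ x)
  palindrome_append_right : Palindrome (y ++ v)

namespace PalindromicFactorization

variable {β : Type*} {u v x y : List β}

theorem append_left (h : PalindromicFactorization u v x y) :
    PalindromicFactorization (u ++ v) v x (y ++ v) where
  append_eq := by rw [h.append_eq, List.append_assoc]
  length_eq := h.length_eq
  palindrome_left := h.palindrome_left
  palindrome_right := h.palindrome_append_right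
  palindrome_append_left :=
    h.append_eq ▸ palindrome_append_append_self h.palindrome_left h.palindrome_right
  palindrome_append_right :=
    palindrome_append_append_of_append_left h.palindrome_right h.palindrome_append_right

theorem append_right (h : PalindromicFactorization u v x y) :
    PalindromicFactorization u (u ++ v) (u ++ x) y where
  append_eq := by rw [h.append_eq, List.append_assoc]
  length_eq := by rw [List.length_append, List.length_append, h.length_eq]
  palindrome_left := h.palindrome_append_left
  palindrome_right := h.palindrome_right
  palindrome_append_left :=
    palindrome_append_append_of_append_right h.palindrome_left h.palindrome_append_left
  palindrome_append_right := by
    rw [h.append_eq, ← List.append_assoc]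
    exact palindrome_append_append_self h.palindrome_right h.palindrome_left

end PalindromicFactorization

theorem ChristoffelPair.exists_palindromicFactorization {β : Type*} {a b : β} {u v : List β}
    (h : ChristoffelPair a b u v) : ∃ x y, PalindromicFactorization u v x y := by
  induction h with
  | base =>
    exact ⟨[a], [b], rfl, rfl, .singleton a, .singleton b, .of_reverse_eq rfl, .of_reverse_eq rfl⟩
  | append_left _ ih =>
    obtain ⟨x, y, hxy⟩ := ih
    exact ⟨x, _, hxy.append_left⟩
  | append_right _ ih =>
    obtain ⟨x, y, hxy⟩ := ih
    exact ⟨_, y, hxy.append_right⟩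

theorem stern_two_mul (n : ℕ) : stern (2 * n) = stern n := by
  cases n with
  | zero => rfl
  | succ k =>
    rw [Nat.mul_succ, stern, if_pos (by omega)]
    congr 1
    omega

theorem stern_two_mul_add_one (n : ℕ) : stern (2 * n + 1) = stern n + stern (n + 1) := by
  cases n with
  | zero => simp [stern]
  | succ k =>
    rw [show 2 * (k + 1) + 1 = 2 * k + 1 + 2 by ring, stern, if_neg (by omega)]
    congr 2 <;> omega

theorem aseq_two_mul (n : ℕ) : aseq (2 * n) = aseq n := by
  cases n with
  | zero => rfl
  | succ k =>
    rw [Nat.mul_succ, aseq, if_pos (by omega)]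
    congr 1
    omega

theorem aseq_two_mul_add_one (n : ℕ) : aseq (2 * n + 1) = n + 1 := by
  cases n with
  | zero => simp [aseq]
  | succ k =>
    rw [show 2 * (k + 1) + 1 = 2 * k + 1 + 2 by ring, aseq, if_neg (by omega)]
    omega

theorem aseq_two_pow (k : ℕ) : aseq (2 ^ k) = 1 := by
  induction k with
  | zero => simp [aseq]
  | succ k ih => rw [pow_succ', aseq_two_mul, ih]

theorem aStar_two_pow (k : ℕ) : aStar (2 ^ k) = 0 :=
  if_pos ⟨k, rfl⟩

theorem aStar_two_mul (n : ℕ) : aStar (2 * n) = aStar n := by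
  have hpow : (∃ k, 2 * n = 2 ^ k) ↔ ∃ k, n = 2 ^ k := by
    constructor
    · rintro ⟨_ | k, hk⟩
      · omega
      · exact ⟨k, by rw [pow_succ] at hk; omega⟩
    · rintro ⟨k, rfl⟩
      exact ⟨k + 1, (pow_succ' 2 k).symm⟩
  rw [aStar, aStar, aseq_two_mul]
  classical exact if_congr hpow rfl rfl

theorem aStar_two_mul_add_one {n : ℕ} (hn : 1 ≤ n) : aStar (2 * n + 1) = n + 1 := by
  rw [aStar, if_neg, aseq_two_mul_add_one]
  rintro ⟨_ | k, hk⟩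
  · omega
  · rw [pow_succ] at hk
    omega

section BlockSeq

variable {α : Type*} (A B : List α)

theorem blockSeq_two_mul {n : ℕ} (hn : 2 ≤ n) :
    blockSeq A B (2 * n) = blockSeq A B n ++ blockSeq A B (aseq n) := by
  obtain ⟨k, rfl⟩ := Nat.exists_eq_add_of_le' hn
  rw [show 2 * (k + 2) = 2 * k + 1 + 3 by ring, blockSeq, if_pos (by omega),
    show (2 * k + 1 + 3) / 2 = k + 2 by omega]

theorem blockSeq_two_mul_add_one {n : ℕ} (hn : 1 ≤ n) :
    blockSeq A B (2 * n + 1) = blockSeq A B (aStar n) ++ blockSeq A B (n + 1) := by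
  obtain ⟨k, rfl⟩ := Nat.exists_eq_add_of_le' hn
  rw [show 2 * (k + 1) + 1 = 2 * k + 3 by ring, blockSeq, if_neg (by omega),
    show (2 * k + 4) / 2 = k + 1 + 1 by omega, Nat.add_sub_cancel]

theorem blockSeq_succ_eq_append {n : ℕ} (hn : 1 ≤ n) :
    blockSeq A B (n + 1) = blockSeq A B (aStar n) ++ blockSeq A B (aseq (n + 1)) := by
  rcases Nat.even_or_odd' n with ⟨j, rfl | rfl⟩
  · rw [blockSeq_two_mul_add_one A B (by omega), aStar_two_mul, aseq_two_mul_add_one]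
  · rw [show 2 * j + 1 + 1 = 2 * (j + 1) by ring, aseq_two_mul]
    rcases Nat.eq_zero_or_pos j with rfl | hj
    · rw [show 2 * 0 + 1 = 2 ^ 0 by rfl, aStar_two_pow]
      simp [blockSeq, aseq]
    · rw [blockSeq_two_mul A B (by omega), aStar_two_mul_add_one hj]

theorem christoffelPair_blockSeq {n : ℕ} (hn : 1 ≤ n) :
    ChristoffelPair A B (blockSeq A B (aStar n)) (blockSeq A B (aseq (n + 1))) := by
  induction n using Nat.strong_induction_on with
  | _ n ih =>
    rcases Nat.even_or_odd' n with ⟨j, rfl | rfl⟩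
    · have hj : 1 ≤ j := by omega
      rw [aStar_two_mul, aseq_two_mul_add_one, blockSeq_succ_eq_append A B hj]
      exact (ih j (by omega) hj).append_right
    · rw [show 2 * j + 1 + 1 = 2 * (j + 1) by ring, aseq_two_mul]
      rcases Nat.eq_zero_or_pos j with rfl | hj
      · rw [show 2 * 0 + 1 = 2 ^ 0 by rfl, aStar_two_pow]
        simpa [blockSeq, aseq] using ChristoffelPair.base
      · rw [aStar_two_mul_add_one hj, blockSeq_succ_eq_append A B hj]
        exact (ih j (by omega) hj).append_left

theorem length_blockSeq_aStar (n : ℕ) :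
    (blockSeq A B (aStar n)).length = (blockSeq A B (aseq n)).length := by
  by_cases hpow : ∃ k, n = 2 ^ k
  · obtain ⟨k, rfl⟩ := hpow
    simp [aStar_two_pow, aseq_two_pow, blockSeq]
  · rw [aStar, if_neg hpow]

theorem length_blockSeq_aseq {n : ℕ} (hn : 1 ≤ n) :
    (blockSeq A B (aseq n)).length = stern n := by
  induction n using Nat.strong_induction_on with
  | _ n ih =>
    rcases Nat.even_or_odd' n with ⟨j, rfl | rfl⟩
    · rw [aseq_two_mul, stern_two_mul, ih j (by omega) (by omega)]
    · rcases Nat.eq_zero_or_pos j with rfl | hj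
      · simp [aseq, blockSeq, stern]
      · rw [aseq_two_mul_add_one, stern_two_mul_add_one, blockSeq_succ_eq_append A B hj,
          List.length_append, length_blockSeq_aStar, ih j (by omega) hj,
          ih (j + 1) (by omega) (by omega)]

theorem eq_or_eq_of_mem_blockSeq {n : ℕ} {l : List α} (hl : l ∈ blockSeq A B n) :
    l = A ∨ l = B := by
  fun_induction blockSeq A B n <;> grind

theorem exists_blockSeq_eq_palindrome_append (n : ℕ) :
    ∃ x y, blockSeq A B n = x ++ y ∧ x.length = stern n ∧ Palindrome x ∧ Palindrome y := by
  match n with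
  | 0 => exact ⟨[], [A], by simp [blockSeq], by simp [stern], .nil, .singleton A⟩
  | 1 => exact ⟨[B], [], by simp [blockSeq], by simp [stern], .singleton B, .nil⟩
  | n + 2 =>
    have hn : 1 ≤ n + 1 := by omega
    obtain ⟨x, y, hxy⟩ := (christoffelPair_blockSeq A B hn).exists_palindromicFactorization
    refine ⟨x, y, ?_, ?_, hxy.palindrome_left, hxy.palindrome_right⟩
    · rw [blockSeq_succ_eq_append A B hn, hxy.append_eq]
    · rw [hxy.length_eq, length_blockSeq_aseq A B (by omega)]

theorem palindrome_rotate_blockSeq {n : ℕ} (heven : Even (stern n)) :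
    Palindrome ((blockSeq A B n).rotate (stern n / 2)) := by
  obtain ⟨x, y, hxy, hlen, hx, hy⟩ := exists_blockSeq_eq_palindrome_append A B n
  rw [hxy, ← hlen]
  exact palindrome_rotate_append_half hx hy (hlen ▸ heven)

end BlockSeq

/-- if `A`, `B` are palindromic and `d(n)` is even, the concatenation of the
entries of the block list `T(n)` rotated by `d(n)/2` blocks is palindromic. -/
theorem stmt0 {α : Type*} (A B : List α) (hA : A.reverse = A) (hB : B.reverse = B)
    (n : ℕ) (hn : 1 ≤ n) (hd : Even (stern n)) :
    (((blockSeq A B n).rotate (stern n / 2)).flatten).reverse =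
      ((blockSeq A B n).rotate (stern n / 2)).flatten := by
  apply Palindrome.reverse_eq
  apply palindrome_flatten (palindrome_rotate_blockSeq A B hd)
  intro l hl
  rcases eq_or_eq_of_mem_blockSeq A B (List.mem_rotate.1 hl) with rfl | rfl
  · exact .of_reverse_eq hA
  · exact .of_reverse_eq hB
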